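/- arXiv:2205.09963 — 7 statements merged into one kernel-verified Lean document; each statement's English description precedes it below -/
import Mathlib

section
/- Let n ≥ 1, let Π be a set, and for each parameter vector ρ ∈ ℝⁿ let u_ρ : Π → ℝ be a function. For ρ ∈ ℝⁿ define the tie-broken strict total order ≺_ρ on {1,…,n} by i ≺_ρ j iff (ρ_i < ρ_j) or (ρ_i = ρ_j and i < j). Assume that whenever ρ, ρ' ∈ ℝⁿ satisfy ≺_ρ = ≺_{ρ'}, one has u_ρ(x) = u_{ρ'}(x) for all x ∈ Π. Then for any pairwise distinct x_1, …, x_N ∈ Π that are pseudo-shattered by the family U = {u_ρ : ρ ∈ ℝⁿ}, it holds that 2^N ≤ n!; in particular the pseudo-dimension of U is at most n·log₂ n. -/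
theorem tie_iff_sort {n : ℕ} (ρ : Fin n → ℝ) (i j : Fin n) :
    (ρ i < ρ j ∨ (ρ i = ρ j ∧ i < j)) ↔ (Tuple.sort ρ).symm i < (Tuple.sort ρ).symm j := by
  obtain ⟨hm, ht⟩ := (Tuple.eq_sort_iff (f := ρ) (σ := Tuple.sort ρ)).1 rfl
  have key : ∀ a b : Fin n, (Tuple.sort ρ).symm a < (Tuple.sort ρ).symm b →
      (ρ a < ρ b ∨ (ρ a = ρ b ∧ a < b)) := by
    intro a b h
    have h1 := hm h.le
    have h2 := ht _ _ h
    simp only [Function.comp, Equiv.apply_symm_apply] at h1 h2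
    rcases h1.lt_or_eq with h3 | h3
    · exact Or.inl h3
    · exact Or.inr ⟨h3, h2 h3⟩
  refine ⟨fun h => ?_, key i j⟩
  rcases lt_trichotomy ((Tuple.sort ρ).symm i) ((Tuple.sort ρ).symm j) with h1 | h1 | h1
  · exact h1
  · have := (Tuple.sort ρ).symm.injective h1
    subst this
    simp at h
  · exfalso
    rcases key j i h1 with h2 | ⟨h2, h3⟩ <;> rcases h with h4 | ⟨h4, h5⟩
    · exact lt_asymm h2 h4
    · exact h2.ne' h4
    · exact h4.ne' h2
    · exact lt_asymm h3 h5

/-- If GBFS-style utility functions `u ρ` depend on `ρ` only through the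
tie-broken strict total order `i ≺_ρ j ↔ ρ i < ρ j ∨ (ρ i = ρ j ∧ i < j)`, then any
pairwise-distinct pseudo-shattered set of size `N` satisfies `2^N ≤ n!`, and hence
`N ≤ n·log₂ n`. -/
theorem stmt_0 (n : ℕ) (hn : 1 ≤ n) (P : Type*)
    (u : (Fin n → ℝ) → P → ℝ)
    (horder : ∀ ρ ρ' : Fin n → ℝ,
      (∀ i j : Fin n,
        (ρ i < ρ j ∨ (ρ i = ρ j ∧ i < j)) ↔ (ρ' i < ρ' j ∨ (ρ' i = ρ' j ∧ i < j))) →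
      ∀ x : P, u ρ x = u ρ' x)
    (N : ℕ) (x : Fin N → P) (hx : Function.Injective x)
    (hshatter : ∃ z : Fin N → ℝ, ∀ b : Fin N → Bool, ∃ ρ : Fin n → ℝ,
      ∀ i : Fin N, (z i ≤ u ρ (x i) ↔ b i = true)) :
    2 ^ N ≤ Nat.factorial n ∧ (N : ℝ) ≤ (n : ℝ) * Real.logb 2 n := by
  have h1 : 2 ^ N ≤ Nat.factorial n := by
    obtain ⟨z, hz⟩ := hshatter
    choose r hr using hz
    have hinj : Function.Injective (fun b : Fin N → Bool => Tuple.sort (r b)) := by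
      intro b c hbc
      have hbc' : Tuple.sort (r b) = Tuple.sort (r c) := hbc
      have hu := horder (r b) (r c) (fun i j => by
        rw [tie_iff_sort, tie_iff_sort, hbc'])
      funext i
      have e := (hr b i).symm.trans ((by rw [hu]) : _ ↔ z i ≤ u (r c) (x i)) |>.trans (hr c i)
      exact Bool.eq_iff_iff.2 e
    have := Fintype.card_le_of_injective _ hinj
    simpa [Fintype.card_perm] using this
  refine ⟨h1, ?_⟩
  have h2 : (2 : ℝ) ^ N ≤ (n : ℝ) ^ n := by
    exact_mod_cast h1.trans (Nat.factorial_le_pow n)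
  have h3 := Real.logb_le_logb_of_le (b := 2) (by norm_num) (by positivity) h2
  rw [Real.logb_pow, Real.logb_pow, Real.logb_self_eq_one (by norm_num), mul_one] at h3
  exact h3
end

section
/- Let n ≥ 1 and m ≥ 2 be integers, let Π be a set, let G assign to every x ∈ Π a finite subset G(x) ⊆ {1,…,n} × ℝ with |G(x)| ≤ m, and for each ρ ∈ ℝⁿ let u_ρ : Π → ℝ be a function. Assume the following score-order invariance: for every x ∈ Π and every ρ, ρ' ∈ ℝⁿ, if for all (v, g), (v', g') ∈ G(x) one has g + ρ_v ≤ g' + ρ_{v'} ⟺ g + ρ'_v ≤ g' + ρ'_{v'}, then u_ρ(x) = u_{ρ'}(x). Then any pairwise distinct x_1, …, x_N ∈ Π with N ≥ n that are pseudo-shattered by the family U = {u_ρ : ρ ∈ ℝⁿ} satisfy 2^N ≤ 2·(e·N·m²)ⁿ. -/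
/-- Affine functions `a j · ρ + c j` on `ℝⁿ`: a set of indices whose sign patterns are all
realized has at most `n` elements. -/
lemma card_le_of_all_signs {n : ℕ} {α : Type*} [DecidableEq α] (s : Finset α)
    (a : α → Fin n → ℝ) (c : α → ℝ)
    (h : ∀ t ⊆ s, ∃ ρ : Fin n → ℝ, ∀ j ∈ s, (0 ≤ (∑ v, a j v * ρ v) + c j ↔ j ∈ t)) :
    s.card ≤ n := by
  classical
  by_contra hlt
  push Not at hlt
  have hdep : ∃ w : α → ℝ, (∀ v, ∑ j ∈ s, w j * a j v = 0) ∧ ∃ j ∈ s, 0 < w j := by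
    have hli : ¬ LinearIndependent ℝ (fun j : s => a j) := by
      intro hli
      have := hli.fintype_card_le_finrank
      simp at this
      omega
    rw [Fintype.not_linearIndependent_iff] at hli
    obtain ⟨g, hg, j0, hj0⟩ := hli
    have key : ∀ g : s → ℝ, (∑ i, g i • a i = 0) → 0 < g j0 →
        ∃ w : α → ℝ, (∀ v, ∑ j ∈ s, w j * a j v = 0) ∧ ∃ j ∈ s, 0 < w j := by
      intro g hg hpos
      refine ⟨fun j => if hj : j ∈ s then g ⟨j, hj⟩ else 0, fun v => ?_, j0, j0.2, ?_⟩
      · have h1 := congrFun hg v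
        rw [← Finset.sum_coe_sort]
        simpa [Finset.sum_apply] using h1
      · simpa using hpos
    rcases lt_or_gt_of_ne hj0 with h0 | h0
    · refine key (fun j => - g j) ?_ (by simpa using h0)
      simp only [neg_smul, Finset.sum_neg_distrib, hg, neg_zero]
    · exact key g hg h0
  obtain ⟨w, hw, j0, hj0, hpos⟩ := hdep
  have hconst : ∀ ρ : Fin n → ℝ,
      ∑ j ∈ s, w j * ((∑ v, a j v * ρ v) + c j) = ∑ j ∈ s, w j * c j := by
    intro ρ
    simp only [mul_add, Finset.sum_add_distrib, Finset.mul_sum]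
    rw [Finset.sum_comm]
    have : ∀ v, ∑ j ∈ s, w j * (a j v * ρ v) = 0 := by
      intro v
      have h1 := hw v
      calc ∑ j ∈ s, w j * (a j v * ρ v) = (∑ j ∈ s, w j * a j v) * ρ v := by
            rw [Finset.sum_mul]; exact Finset.sum_congr rfl fun _ _ => by ring
        _ = 0 := by rw [h1, zero_mul]
    simp [this]
  obtain ⟨ρ1, h1⟩ := h (s.filter fun j => 0 ≤ w j) (Finset.filter_subset _ _)
  obtain ⟨ρ2, h2⟩ := h (s.filter fun j => w j ≤ 0) (Finset.filter_subset _ _)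
  have e1 : 0 ≤ ∑ j ∈ s, w j * ((∑ v, a j v * ρ1 v) + c j) := by
    refine Finset.sum_nonneg fun j hj => ?_
    have := h1 j hj
    simp only [Finset.mem_filter, hj, true_and] at this
    by_cases hw0 : 0 ≤ w j
    · exact mul_nonneg hw0 (this.2 hw0)
    · have h3 := mt this.1 hw0
      push Not at h3 hw0
      exact (mul_pos_of_neg_of_neg hw0 h3).le
  have hneg : ∀ j ∈ s, 0 < w j → w j * ((∑ v, a j v * ρ2 v) + c j) < 0 := by
    intro j hj hp
    have := h2 j hj
    simp only [Finset.mem_filter, hj, true_and] at this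
    have h3 := mt this.1 (not_le.2 hp)
    exact mul_neg_of_pos_of_neg hp (not_le.1 h3)
  have e2 : ∑ j ∈ s, w j * ((∑ v, a j v * ρ2 v) + c j) < 0 := by
    refine Finset.sum_neg' (fun j hj => ?_) ⟨j0, hj0, hneg j0 hj0 hpos⟩
    rcases lt_or_ge 0 (w j) with hp | hp
    · exact (hneg j hj hp).le
    · have := h2 j hj
      simp only [Finset.mem_filter, hj, true_and] at this
      exact mul_nonpos_of_nonpos_of_nonneg hp (this.2 hp)
  rw [hconst] at e1 e2
  linarith

/-- Crude estimate for the sum of binomial coefficients. -/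
lemma sum_choose_le_exp (M n d : ℕ) (hM : 1 ≤ M) (hn : 1 ≤ n) (hd : d ≤ n) :
    ((∑ k ∈ Finset.Iic d, M.choose k : ℕ) : ℝ) ≤ (Real.exp 1 * M) ^ n := by
  have hM' : (1 : ℝ) ≤ M := by exact_mod_cast hM
  have he : (1 : ℝ) ≤ Real.exp 1 := Real.one_le_exp (by norm_num)
  have h1 : ((∑ k ∈ Finset.Iic d, M.choose k : ℕ) : ℝ) ≤
      ∑ k ∈ Finset.range (n + 1), (M : ℝ) ^ n * ((1 : ℝ) ^ k / (k.factorial : ℝ)) := by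
    push_cast
    calc ∑ k ∈ Finset.Iic d, (M.choose k : ℝ) ≤ ∑ k ∈ Finset.range (n + 1), (M.choose k : ℝ) := by
          refine Finset.sum_le_sum_of_subset_of_nonneg ?_ fun _ _ _ => by positivity
          intro k hk
          simp at hk ⊢
          omega
      _ ≤ _ := by
          refine Finset.sum_le_sum fun k hk => ?_
          simp at hk
          have h2 : (M.choose k : ℝ) ≤ (M : ℝ) ^ k / (k.factorial : ℝ) := Nat.choose_le_pow_div k M
          refine h2.trans ?_
          rw [one_pow, mul_one_div]
          gcongr
  rw [← Finset.mul_sum] at h1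
  have h3 := Real.sum_le_exp_of_nonneg (x := 1) (by norm_num) (n + 1)
  calc _ ≤ _ := h1
    _ ≤ (M : ℝ) ^ n * Real.exp 1 := by gcongr
    _ ≤ (M : ℝ) ^ n * Real.exp 1 ^ n := by
        gcongr
        exact le_self_pow₀ he (by omega)
    _ = _ := by rw [mul_pow, mul_comm]

/-- master counting lemma for A*. If `u ρ` depends on `ρ` only through the
order of the scores `g + ρ v` over `(v, g) ∈ G(x)`, where `|G(x)| ≤ m`, then any
pairwise-distinct pseudo-shattered set of size `N ≥ n` satisfies `2^N ≤ 2·(e·N·m²)ⁿ`. -/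
theorem stmt_1 (n m : ℕ) (hn : 1 ≤ n) (hm : 2 ≤ m) (P : Type*)
    (G : P → Finset (Fin n × ℝ)) (hG : ∀ x : P, (G x).card ≤ m)
    (u : (Fin n → ℝ) → P → ℝ)
    (hinv : ∀ (x : P) (ρ ρ' : Fin n → ℝ),
      (∀ vg ∈ G x, ∀ vg' ∈ G x,
        (vg.2 + ρ vg.1 ≤ vg'.2 + ρ vg'.1 ↔ vg.2 + ρ' vg.1 ≤ vg'.2 + ρ' vg'.1)) →
      u ρ x = u ρ' x)
    (N : ℕ) (hN : n ≤ N) (x : Fin N → P) (hx : Function.Injective x)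
    (hshatter : ∃ z : Fin N → ℝ, ∀ b : Fin N → Bool, ∃ ρ : Fin n → ℝ,
      ∀ i : Fin N, (z i ≤ u ρ (x i) ↔ b i = true)) :
    (2 : ℝ) ^ N ≤ 2 * (Real.exp 1 * N * (m : ℝ) ^ 2) ^ n := by
  classical
  obtain ⟨z, hz⟩ := hshatter
  choose R hR using hz
  let J : Finset (Fin N × (Fin n × ℝ) × (Fin n × ℝ)) :=
    Finset.univ.biUnion fun i => {i} ×ˢ (G (x i) ×ˢ G (x i))
  have hJmem : ∀ i p q, (i, p, q) ∈ J ↔ p ∈ G (x i) ∧ q ∈ G (x i) := by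
    intro i p q
    simp [J]
  have hJ : J.card ≤ N * m ^ 2 := by
    refine Finset.card_biUnion_le.trans ?_
    calc _ ≤ ∑ _i : Fin N, m ^ 2 := by
          refine Finset.sum_le_sum fun i _ => ?_
          rw [Finset.card_product, Finset.card_product, Finset.card_singleton, one_mul, sq]
          exact Nat.mul_le_mul (hG _) (hG _)
      _ = _ := by simp
  let S : (Fin n → ℝ) → Finset J := fun ρ =>
    Finset.univ.filter fun j => j.1.2.1.2 + ρ j.1.2.1.1 ≤ j.1.2.2.2 + ρ j.1.2.2.1
  let F : Finset (Finset J) := Finset.univ.image fun b => S (R b)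
  have hinj : Function.Injective fun b => S (R b) := by
    intro b b' hbb
    funext i
    have hu : u (R b) (x i) = u (R b') (x i) := by
      refine hinv _ _ _ fun p hp q hq => ?_
      have := Finset.ext_iff.1 hbb ⟨(i, p, q), (hJmem _ _ _).2 ⟨hp, hq⟩⟩
      simpa [S] using this
    have h1 := hR b i
    have h2 := hR b' i
    rw [hu] at h1
    exact Bool.eq_iff_iff.2 (h1.symm.trans h2)
  have hF : F.card = 2 ^ N := by
    rw [Finset.card_image_of_injective _ hinj]
    simp
  have hvc : F.vcDim ≤ n := by
    refine Finset.sup_le fun s hs => ?_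
    rw [Finset.mem_shatterer] at hs
    refine card_le_of_all_signs s
      (fun j v => (if v = j.1.2.2.1 then 1 else 0) - (if v = j.1.2.1.1 then 1 else 0))
      (fun j => j.1.2.2.2 - j.1.2.1.2) fun t ht => ?_
    obtain ⟨A, hA, hAt⟩ := hs ht
    obtain ⟨b, -, rfl⟩ := Finset.mem_image.1 hA
    refine ⟨R b, fun j hj => ?_⟩
    rw [← hAt, Finset.mem_inter]
    simp only [hj, true_and, S, Finset.mem_filter, Finset.mem_univ, sub_mul, ite_mul, one_mul,
      zero_mul, Finset.sum_sub_distrib, Finset.sum_ite_eq', if_true, Finset.sum_ite_eq]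
    constructor <;> intro h <;> linarith
  have hcard := F.card_le_card_shatterer.trans Finset.card_shatterer_le_sum_vcDim
  rw [hF, Fintype.card_coe] at hcard
  have hcard2 : 2 ^ N ≤ ∑ k ∈ Finset.Iic F.vcDim, (N * m ^ 2).choose k :=
    hcard.trans (Finset.sum_le_sum fun k _ => Nat.choose_le_choose k hJ)
  have hM : 1 ≤ N * m ^ 2 := Nat.mul_pos (by omega) (by positivity)
  have hfin := sum_choose_le_exp (N * m ^ 2) n F.vcDim hM hn hvc
  have h4 : (2 : ℝ) ^ N ≤ ((∑ k ∈ Finset.Iic F.vcDim, (N * m ^ 2).choose k : ℕ) : ℝ) := by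
    exact_mod_cast hcard2
  have h5 := h4.trans hfin
  push_cast at h5
  rw [← mul_assoc] at h5
  have h6 : 0 ≤ (Real.exp 1 * N * (m : ℝ) ^ 2) ^ n := by positivity
  linarith
end

section
/- Let n ≥ 2 and let Π be a set where each x ∈ Π is a path-finding instance consisting of a directed graph on vertex set V = {1,…,n} with edge set E_x ⊆ V×V (no self-loops), edge weights w_x : E_x → ℝ_{≥0}, and a start vertex s_x ∈ V. For x ∈ Π define G(x) = {(v, c) ∈ V × ℝ : c is the cost of some simple directed path from s_x to v in x}. For each ρ ∈ ℝⁿ let u_ρ : Π → ℝ and assume the score-order invariance: for every x ∈ Π and every ρ, ρ' ∈ ℝⁿ, if for all (v, g), (v', g') ∈ G(x) one has g + ρ_v ≤ g' + ρ_{v'} ⟺ g + ρ'_v ≤ g' + ρ'_{v'}, then u_ρ(x) = u_{ρ'}(x). Then any pairwise distinct x_1, …, x_N ∈ Π pseudo-shattered by U = {u_ρ : ρ ∈ ℝⁿ} satisfy N ≤ 4n·log₂(2e·n·(n!)²); in particular the pseudo-dimension of U is O(n² lg n). -/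
/-- A simple directed path from `s` to `v` in the graph on `Fin n` with edge set `E`:
a nonempty list of pairwise distinct vertices starting at `s`, ending at `v`, with
consecutive vertices joined by edges. -/
def IsSimplePath (n : ℕ) (E : Finset (Fin n × Fin n)) (s v : Fin n)
    (p : List (Fin n)) : Prop :=
  p.Nodup ∧ p.head? = some s ∧ p.getLast? = some v ∧
    p.Chain' (fun a b => (a, b) ∈ E)

/-- The cost of a path: the sum of the weights of its consecutive edges. -/
def pathCost (n : ℕ) (w : Fin n × Fin n → ℝ) (p : List (Fin n)) : ℝ :=
  ((p.zip p.tail).map w).sum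

/-- The set of pairs `(v, c)` such that `c` is the cost of some simple directed path
from `s` to `v`. -/
def Gset (n : ℕ) (E : Finset (Fin n × Fin n)) (w : Fin n × Fin n → ℝ)
    (s : Fin n) : Set (Fin n × ℝ) :=
  {vc | ∃ p : List (Fin n), IsSimplePath n E s vc.1 p ∧ pathCost n w p = vc.2}

/-- Sign patterns of affine halfspaces form a family of VC dimension at most `n`. -/
lemma aux_shatter_card {α : Type*} [Fintype α] [DecidableEq α] {n : ℕ}
    (a : α → Fin n → ℝ) (c : α → ℝ) (A : Finset (Finset α))
    (hA : ∀ S ∈ A, ∃ ρ : Fin n → ℝ, ∀ j, j ∈ S ↔ ∑ v, a j v * ρ v ≤ c j)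
    (T : Finset α) (hT : A.Shatters T) : T.card ≤ n := by
  classical
  by_contra hlt
  push Not at hlt
  have hdep : ¬ LinearIndependent ℝ (fun j : T => a j) := by
    intro h
    have := h.fintype_card_le_finrank
    simp at this
    omega
  rw [Fintype.not_linearIndependent_iff] at hdep
  obtain ⟨g, hg, j0, hj0⟩ := hdep
  have hg' : ∀ ρ : Fin n → ℝ, ∑ j : T, g j * (∑ v, a j v * ρ v) = 0 := by
    intro ρ
    have h1 : ∀ v, ∑ j : T, g j * a j v = 0 := by
      intro v
      have := congrFun hg v
      simpa using this
    calc ∑ j : T, g j * (∑ v, a j v * ρ v) = ∑ v, (∑ j : T, g j * a j v) * ρ v := by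
          simp only [Finset.mul_sum, Finset.sum_mul]
          rw [Finset.sum_comm]
          simp only [mul_assoc]
      _ = 0 := Finset.sum_eq_zero fun v _ => by rw [h1 v, zero_mul]
  have key : ∀ Q : T → Prop, ∃ ρ : Fin n → ℝ, ∀ j : T, Q j ↔ ∑ v, a j v * ρ v ≤ c j := by
    intro Q
    obtain ⟨S, hS, hTS⟩ := hT (t := T.filter (fun j => ∃ h : j ∈ T, Q ⟨j, h⟩)) (Finset.filter_subset _ _)
    obtain ⟨ρ, hρ⟩ := hA S hS
    refine ⟨ρ, fun j => ?_⟩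
    rw [← hρ]
    have := congrArg (fun X => (j : α) ∈ X) hTS
    simp at this
    exact this.symm
  have e : ∀ ρ : Fin n → ℝ, ∑ j : T, g j * (∑ v, a j v * ρ v - c j) = - ∑ j : T, g j * c j := by
    intro ρ
    simp only [mul_sub, Finset.sum_sub_distrib, hg' ρ, zero_sub]
  obtain ⟨ρ1, h1⟩ := key (fun j => 0 ≤ g j)
  obtain ⟨ρ2, h2⟩ := key (fun j => g j < 0)
  have t1 : ∀ j : T, g j * (∑ v, a j v * ρ1 v - c j) ≤ 0 := by
    intro j
    rcases le_or_gt 0 (g j) with h | h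
    · exact mul_nonpos_of_nonneg_of_nonpos h (by linarith [(h1 j).1 h])
    · have : ¬ (∑ v, a j v * ρ1 v ≤ c j) := fun h' => absurd ((h1 j).2 h') (not_le.2 h)
      push Not at this
      nlinarith
  have t2 : ∀ j : T, 0 ≤ g j * (∑ v, a j v * ρ2 v - c j) := by
    intro j
    rcases lt_or_ge (g j) 0 with h | h
    · have := (h2 j).1 h
      nlinarith
    · have : ¬ (∑ v, a j v * ρ2 v ≤ c j) := fun h' => absurd ((h2 j).2 h') (not_lt.2 h)
      push Not at this
      exact mul_nonneg h (by linarith)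
  have s1 := Finset.sum_nonpos (fun j (_ : j ∈ Finset.univ) => t1 j)
  have s2 := Finset.sum_nonneg (fun j (_ : j ∈ Finset.univ) => t2 j)
  rw [e] at s1 s2
  have z1 : ∑ j : T, g j * (∑ v, a j v * ρ1 v - c j) = 0 := by rw [e]; linarith
  have z2 : ∑ j : T, g j * (∑ v, a j v * ρ2 v - c j) = 0 := by rw [e]; linarith
  have y1 := (Finset.sum_eq_zero_iff_of_nonpos (fun j _ => t1 j)).1 z1 j0 (Finset.mem_univ _)
  have y2 := (Finset.sum_eq_zero_iff_of_nonneg (fun j _ => t2 j)).1 z2 j0 (Finset.mem_univ _)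
  have y1' := (mul_eq_zero.1 y1).resolve_left hj0
  have y2' := (mul_eq_zero.1 y2).resolve_left hj0
  have hn : 0 ≤ g j0 := (h1 j0).2 (by linarith)
  have hp : g j0 < 0 := (h2 j0).2 (by linarith)
  linarith

lemma aux_pattern_card {α : Type*} [Fintype α] [DecidableEq α] {n : ℕ}
    (a : α → Fin n → ℝ) (c : α → ℝ) (A : Finset (Finset α))
    (hA : ∀ S ∈ A, ∃ ρ : Fin n → ℝ, ∀ j, j ∈ S ↔ ∑ v, a j v * ρ v ≤ c j) :
    A.card ≤ (Fintype.card α + 1) ^ n := by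
  have hvc : A.vcDim ≤ n := by
    unfold Finset.vcDim
    exact Finset.sup_le fun T hT => aux_shatter_card a c A hA T (Finset.mem_shatterer.1 hT)
  calc A.card ≤ A.shatterer.card := Finset.card_le_card_shatterer A
    _ ≤ ∑ k ∈ Finset.Iic A.vcDim, (Fintype.card α).choose k := Finset.card_shatterer_le_sum_vcDim
    _ ≤ ∑ k ∈ Finset.range (n + 1), (Fintype.card α).choose k := by
        apply Finset.sum_le_sum_of_subset
        intro k hk
        simp at hk ⊢
        omega
    _ ≤ ∑ k ∈ Finset.range (n + 1), (Fintype.card α) ^ k * 1 ^ (n - k) * n.choose k := by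
        apply Finset.sum_le_sum
        intro k hk
        have h1 : 1 ≤ n.choose k := Nat.choose_pos (by simp at hk; omega)
        have h2 := Nat.choose_le_pow (Fintype.card α) k
        simp only [one_pow, mul_one]
        nlinarith
    _ = (Fintype.card α + 1) ^ n := by rw [add_pow]; simp

/-- A finite set of lists containing all nonempty duplicate-free ones. -/
def auxPaths (n : ℕ) : Finset (List (Fin n)) :=
  ((List.finRange n).permutations.toFinset ×ˢ Finset.range n).image (fun q => q.1.take (q.2 + 1))

lemma auxPaths_card (n : ℕ) : (auxPaths n).card ≤ n.factorial * n := by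
  refine Finset.card_image_le.trans ?_
  rw [Finset.card_product, Finset.card_range]
  gcongr
  refine (List.toFinset_card_le _).trans ?_
  simp [List.length_permutations]

lemma mem_auxPaths {n : ℕ} (p : List (Fin n)) (hp : p.Nodup) (hne : p ≠ []) : p ∈ auxPaths n := by
  have hlen : p.length ≤ n := by simpa using hp.length_le_card
  have hpos : 0 < p.length := List.length_pos_iff.2 hne
  refine Finset.mem_image.2 ⟨(p ++ (List.finRange n).filter (fun v => v ∉ p), p.length - 1), ?_, ?_⟩
  · simp only [Finset.mem_product, List.mem_toFinset, List.mem_permutations, Finset.mem_range]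
    refine ⟨?_, by omega⟩
    rw [List.perm_ext_iff_of_nodup _ (List.nodup_finRange n)]
    · intro v
      simp
      tauto
    · rw [List.nodup_append']
      refine ⟨hp, (List.nodup_finRange n).filter _, ?_⟩
      intro v hv
      simp [hv]
  · have : p.length - 1 + 1 = p.length := by omega
    simp [this]

lemma aux_analysis (n N : ℕ) (hn : 2 ≤ n)
    (h : 2 ^ N ≤ (N * ((n.factorial * n) * (n.factorial * n)) + 1) ^ n) :
    (N : ℝ) ≤ 4 * n * Real.logb 2 (2 * Real.exp 1 * n * ((Nat.factorial n : ℝ)) ^ 2) := by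
  have hn0 : (2 : ℝ) ≤ n := by exact_mod_cast hn
  have hnpos : (0 : ℝ) < n := by linarith
  have hfn : (n : ℝ) ≤ (n.factorial : ℝ) := by exact_mod_cast Nat.self_le_factorial n
  have hf : (0 : ℝ) < (n.factorial : ℝ) := by linarith
  have hl2 : 1 / 2 < Real.log 2 := by linarith [Real.log_two_gt_d9]
  have hl2' : Real.log 2 < 0.7 := by linarith [Real.log_two_lt_d9]
  have hL : Real.log (2 * Real.exp 1 * n * ((Nat.factorial n : ℝ)) ^ 2)
      = Real.log 2 + 1 + Real.log n + 2 * Real.log n.factorial := by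
    rw [Real.log_mul (by positivity) (by positivity), Real.log_mul (by positivity) (by positivity),
      Real.log_mul (by positivity) (by positivity), Real.log_exp, Real.log_pow]
    push_cast; ring
  have hlf : Real.log n ≤ Real.log n.factorial := Real.log_le_log hnpos hfn
  have hln : 0 ≤ Real.log n := Real.log_nonneg (by linarith)
  rw [Real.logb, hL, ← mul_div_assoc, le_div_iff₀ (by linarith)]
  rcases Nat.eq_zero_or_pos N with h0 | h0
  · subst h0
    simp only [Nat.cast_zero, zero_mul]
    have : 0 ≤ Real.log 2 + 1 + Real.log n + 2 * Real.log n.factorial := by linarith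
    positivity
  have hN : (1 : ℝ) ≤ N := by exact_mod_cast h0
  have hNpos : (0 : ℝ) < N := by linarith
  set T : ℝ := N / n with hTdef
  have hTpos : 0 < T := by positivity
  have hNT : (N : ℝ) = n * T := by rw [hTdef]; field_simp
  have hR : (2 : ℝ) ^ N ≤ (2 * n * (n.factorial * n) ^ 2 * T) ^ n := by
    have h' : (2 : ℝ) ^ N ≤ (N * ((n.factorial * n) * (n.factorial * n)) + 1) ^ n := by
      exact_mod_cast h
    refine h'.trans ?_
    gcongr
    have h1 : (1 : ℝ) ≤ n.factorial * n := by nlinarith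
    have h2 : (1 : ℝ) ≤ N * ((n.factorial * n) * (n.factorial * n)) := by
      have := mul_le_mul h1 h1 zero_le_one (by positivity)
      nlinarith
    have h3 : 2 * n * (n.factorial * n : ℝ) ^ 2 * T = 2 * (N * ((n.factorial * n) * (n.factorial * n))) := by
      rw [hNT]; ring
    rw [h3]; linarith
  have hlog := Real.log_le_log (by positivity) hR
  rw [Real.log_pow, Real.log_pow, Real.log_mul (by positivity) (by positivity),
    Real.log_mul (by positivity) (by positivity), Real.log_mul (by positivity) (by positivity),
    Real.log_pow, Real.log_mul (by positivity) (by positivity), hNT, mul_assoc] at hlog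
  have hlog' := le_of_mul_le_mul_left hlog hnpos
  have hT4 := Real.log_le_sub_one_of_pos (show 0 < T / 4 by positivity)
  have h4 : Real.log 4 = 2 * Real.log 2 := by
    rw [show (4 : ℝ) = 2 ^ 2 by norm_num, Real.log_pow]; norm_num
  rw [Real.log_div (by positivity) (by norm_num), h4] at hT4
  rw [hNT]
  have : T * Real.log 2 ≤ 4 * (Real.log 2 + 1 + Real.log n + 2 * Real.log n.factorial) := by
    push_cast at hlog'
    nlinarith
  nlinarith

/-- pseudo-dimension bound for A* on general path-finding instances:
if `u ρ` depends on `ρ` only through the order of the scores `g + ρ v` over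
`(v, g) ∈ G(x)`, then any pairwise-distinct pseudo-shattered set of size `N`
satisfies `N ≤ 4n·log₂(2e·n·(n!)²)`, i.e. `Pdim = O(n² lg n)`. -/
theorem stmt_2 (n : ℕ) (hn : 2 ≤ n) (P : Type*)
    (E : P → Finset (Fin n × Fin n))
    (hloop : ∀ x : P, ∀ e ∈ E x, e.1 ≠ e.2)
    (w : P → Fin n × Fin n → ℝ)
    (hw : ∀ x : P, ∀ e ∈ E x, 0 ≤ w x e)
    (s : P → Fin n)
    (u : (Fin n → ℝ) → P → ℝ)
    (hinv : ∀ (x : P) (ρ ρ' : Fin n → ℝ),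
      (∀ vg ∈ Gset n (E x) (w x) (s x), ∀ vg' ∈ Gset n (E x) (w x) (s x),
        (vg.2 + ρ vg.1 ≤ vg'.2 + ρ vg'.1 ↔ vg.2 + ρ' vg.1 ≤ vg'.2 + ρ' vg'.1)) →
      u ρ x = u ρ' x)
    (N : ℕ) (x : Fin N → P) (hx : Function.Injective x)
    (hshatter : ∃ z : Fin N → ℝ, ∀ b : Fin N → Bool, ∃ ρ : Fin n → ℝ,
      ∀ i : Fin N, (z i ≤ u ρ (x i) ↔ b i = true)) :
    (N : ℝ) ≤ 4 * n * Real.logb 2 (2 * Real.exp 1 * n * ((Nat.factorial n : ℝ)) ^ 2) := by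
  classical
  obtain ⟨z, hz⟩ := hshatter
  choose ρ hρ using hz
  let v0 : Fin n := ⟨0, by omega⟩
  let lst : List (Fin n) → Fin n := fun p => p.getLast?.getD v0
  let α := Fin N × (auxPaths n) × (auxPaths n)
  let cst : Fin N → List (Fin n) → ℝ := fun i p => pathCost n (w (x i)) p
  let a : α → Fin n → ℝ := fun j => Pi.single (lst j.2.1) 1 - Pi.single (lst j.2.2) 1
  let c : α → ℝ := fun j => cst j.1 j.2.2 - cst j.1 j.2.1
  have hsum : ∀ (j : α) (r : Fin n → ℝ), ∑ v, a j v * r v = r (lst j.2.1) - r (lst j.2.2) := by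
    intro j r
    simp [a, sub_mul, Finset.sum_sub_distrib, Pi.single_apply]
  let pat : (Fin N → Bool) → Finset α := fun b =>
    Finset.univ.filter (fun j => ∑ v, a j v * ρ b v ≤ c j)
  have hinj : Function.Injective pat := by
    intro b b' hbb
    funext i
    have hu : u (ρ b) (x i) = u (ρ b') (x i) := by
      apply hinv
      rintro ⟨v, g⟩ ⟨p, hp, hpc⟩ ⟨v', g'⟩ ⟨q, hq, hqc⟩
      obtain ⟨hp1, hp2, hp3, -⟩ := hp
      obtain ⟨hq1, hq2, hq3, -⟩ := hq
      have hpm := mem_auxPaths p hp1 (by rintro rfl; simp at hp2)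
      have hqm := mem_auxPaths q hq1 (by rintro rfl; simp at hq2)
      have hmem := congrArg (fun X => ((i, ⟨p, hpm⟩, ⟨q, hqm⟩) : α) ∈ X) hbb
      have hlp : lst p = v := by simp only [lst]; rw [hp3]; rfl
      have hlq : lst q = v' := by simp only [lst]; rw [hq3]; rfl
      simp only [pat, Finset.mem_filter, Finset.mem_univ, true_and, hsum, c, cst, hlp, hlq,
        eq_iff_iff] at hmem
      simp only at hpc hqc ⊢
      rw [hpc, hqc] at hmem
      constructor
      · intro h
        have := hmem.1 (by linarith)
        linarith
      · intro h
        have := hmem.2 (by linarith)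
        linarith
    have h1 := hρ b i
    have h2 := hρ b' i
    rw [hu] at h1
    exact Bool.eq_iff_iff.2 (h1.symm.trans h2)
  have hcard := aux_pattern_card a c (Finset.univ.image pat) (by
    intro S hS
    obtain ⟨b, -, rfl⟩ := Finset.mem_image.1 hS
    exact ⟨ρ b, fun j => by simp [pat]⟩)
  rw [Finset.card_image_of_injective _ hinj] at hcard
  simp only [Finset.card_univ, Fintype.card_pi, Fintype.card_bool, Finset.prod_const,
    Fintype.card_fin, α, Fintype.card_prod, Fintype.card_coe] at hcard
  refine aux_analysis n N hn (hcard.trans ?_)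
  have := auxPaths_card n
  gcongr
end

section
/- Let n ≥ 2 and d ≥ 2, and let Π be a set where each x ∈ Π is a path-finding instance consisting of a directed graph on vertex set V = {1,…,n} with edge set E_x ⊆ V×V (no self-loops) in which every vertex has out-degree at most d, edge weights w_x : E_x → ℝ_{≥0}, and a start vertex s_x ∈ V. For x ∈ Π define G(x) = {(v, c) ∈ V × ℝ : c is the cost of some simple directed path from s_x to v in x}. For each ρ ∈ ℝⁿ let u_ρ : Π → ℝ and assume the score-order invariance: for every x ∈ Π and every ρ, ρ' ∈ ℝⁿ, if for all (v, g), (v', g') ∈ G(x) one has g + ρ_v ≤ g' + ρ_{v'} ⟺ g + ρ'_v ≤ g' + ρ'_{v'}, then u_ρ(x) = u_{ρ'}(x). Then any pairwise distinct x_1, …, x_N ∈ Π pseudo-shattered by U = {u_ρ : ρ ∈ ℝⁿ} satisfy N ≤ 4n·log₂(2e·n·(n(n−1)d^{n−2})²); in particular the pseudo-dimension of U is O(n² lg d). -/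
open Finset in
lemma sum_choose_le_pow (T n : ℕ) : ∑ k ∈ Finset.Iic n, T.choose k ≤ (T + 1) ^ n := by
  rw [add_pow]
  have : Finset.Iic n = Finset.range (n + 1) := by ext; simp [Nat.lt_succ_iff]
  rw [this]
  refine Finset.sum_le_sum fun k hk => ?_
  have hk' : k ≤ n := by simpa [Nat.lt_succ_iff] using hk
  have h1 : 1 ≤ n.choose k := Nat.choose_pos hk'
  calc T.choose k ≤ T ^ k := Nat.choose_le_pow T k
    _ ≤ T ^ k * 1 ^ (n - k) * n.choose k := by simpa using Nat.le_mul_of_pos_right _ h1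

lemma shatter_card_le {ι : Type*} [Fintype ι] [DecidableEq ι] (n : ℕ)
    (L : ι → Module.Dual ℝ (Fin n → ℝ)) (c : ι → ℝ) (A : Finset (Finset ι))
    (hA : ∀ S ∈ A, ∃ ρ : Fin n → ℝ, ∀ j, j ∈ S ↔ L j ρ ≤ c j)
    (s : Finset ι) (hs : A.Shatters s) : s.card ≤ n := by
  by_contra hlt
  push Not at hlt
  have hnli : ¬ LinearIndependent ℝ (fun j : s => L j) := by
    intro h
    have := h.fintype_card_le_finrank
    rw [Subspace.dual_finrank_eq] at this
    simp at this
    omega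
  rw [Fintype.not_linearIndependent_iff] at hnli
  obtain ⟨g, hg, j0, hj0⟩ := hnli
  have hsum : ∀ ρ, ∑ j : s, g j * (L j ρ - c j) = - ∑ j : s, g j * c j := by
    intro ρ
    have h := congrArg (fun l : Module.Dual ℝ (Fin n → ℝ) => l ρ) hg
    simp only [LinearMap.sum_apply, LinearMap.smul_apply, smul_eq_mul,
      LinearMap.zero_apply] at h
    simp only [mul_sub, Finset.sum_sub_distrib]
    rw [h]; ring
  have key : ∀ p : s → Prop, ∃ ρ : Fin n → ℝ, ∀ j : s, (p j ↔ L j ρ ≤ c j) := by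
    classical
    intro p
    have ht : (Finset.univ.filter p).map (Function.Embedding.subtype _) ⊆ s := by
      intro j hj
      simp at hj
      exact hj.1
    obtain ⟨S, hS, hSt⟩ := hs ht
    obtain ⟨ρ, hρ⟩ := hA S hS
    refine ⟨ρ, fun j => ?_⟩
    rw [← hρ]
    have h2 := congrArg (fun t => (j : ι) ∈ t) hSt
    simpa using h2.symm
  obtain ⟨r1, h1⟩ := key (fun j => 0 < g j)
  obtain ⟨r2, h2⟩ := key (fun j => g j < 0)
  have t1 : ∀ j : s, g j * (L j r1 - c j) ≤ 0 := by
    intro j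
    by_cases h : 0 < g j
    · have := (h1 j).1 h
      nlinarith
    · have := (h1 j).not.1 h
      nlinarith
  have t2 : ∀ j : s, 0 ≤ g j * (L j r2 - c j) := by
    intro j
    by_cases h : g j < 0
    · have := (h2 j).1 h
      nlinarith
    · have := (h2 j).not.1 h
      nlinarith
  have e : ∑ j : s, g j * (L j r1 - c j) = ∑ j : s, g j * (L j r2 - c j) := by
    rw [hsum, hsum]
  have s1 := Finset.sum_nonpos (s := Finset.univ) (fun j _ => t1 j)
  have s2 := Finset.sum_nonneg (s := Finset.univ) (fun j _ => t2 j)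
  have z1 : ∑ j : s, g j * (L j r1 - c j) = 0 := le_antisymm s1 (e ▸ s2)
  have z2 : ∑ j : s, g j * (L j r2 - c j) = 0 := e ▸ z1
  have y1 := (Finset.sum_eq_zero_iff_of_nonpos (fun j _ => t1 j)).1 z1 j0 (Finset.mem_univ _)
  have y2 := (Finset.sum_eq_zero_iff_of_nonneg (fun j _ => t2 j)).1 z2 j0 (Finset.mem_univ _)
  have y1' := (mul_eq_zero.1 y1).resolve_left hj0
  have y2' := (mul_eq_zero.1 y2).resolve_left hj0
  have q1 : 0 < g j0 := (h1 j0).2 (by linarith)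
  have q2 : g j0 < 0 := (h2 j0).2 (by linarith)
  linarith

lemma family_card_le {ι : Type*} [Fintype ι] [DecidableEq ι] (n : ℕ)
    (L : ι → Module.Dual ℝ (Fin n → ℝ)) (c : ι → ℝ) (A : Finset (Finset ι))
    (hA : ∀ S ∈ A, ∃ ρ : Fin n → ℝ, ∀ j, j ∈ S ↔ L j ρ ≤ c j) :
    A.card ≤ (Fintype.card ι + 1) ^ n := by
  have hv : A.vcDim ≤ n := by
    unfold Finset.vcDim
    refine Finset.sup_le fun s hs => ?_
    exact shatter_card_le n L c A hA s (Finset.mem_shatterer.1 hs)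
  calc A.card ≤ A.shatterer.card := Finset.card_le_card_shatterer A
    _ ≤ ∑ k ∈ Finset.Iic A.vcDim, (Fintype.card ι).choose k := Finset.card_shatterer_le_sum_vcDim
    _ ≤ ∑ k ∈ Finset.Iic n, (Fintype.card ι).choose k :=
        Finset.sum_le_sum_of_subset (Finset.Iic_subset_Iic.2 hv)
    _ ≤ _ := sum_choose_le_pow _ _

/-- Walks with `k` edges from `s`. -/
def walksFrom (n : ℕ) (E : Finset (Fin n × Fin n)) : ℕ → Fin n → Finset (List (Fin n))
  | 0, s => {[s]}
  | k + 1, s => (E.filter (fun e => e.1 = s)).biUnion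
      fun e => (walksFrom n E k e.2).image (fun p => s :: p)

lemma walks_card (n d : ℕ) (E : Finset (Fin n × Fin n))
    (hdeg : ∀ u : Fin n, (E.filter (fun e => e.1 = u)).card ≤ d) (k : ℕ) (s : Fin n) :
    (walksFrom n E k s).card ≤ d ^ k := by
  induction k generalizing s with
  | zero => simp [walksFrom]
  | succ k ih =>
    rw [walksFrom]
    refine (Finset.card_biUnion_le_card_mul _ _ (d ^ k)
      fun e _ => Finset.card_image_le.trans (ih e.2)).trans ?_
    rw [pow_succ, mul_comm]
    exact Nat.mul_le_mul_left _ (hdeg s)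

lemma walks_card' (n d : ℕ) (E : Finset (Fin n × Fin n)) (hloop : ∀ e ∈ E, e.1 ≠ e.2)
    (hdeg : ∀ u : Fin n, (E.filter (fun e => e.1 = u)).card ≤ d) (k : ℕ) (s : Fin n) :
    (walksFrom n E (k + 1) s).card ≤ (n - 1) * d ^ k := by
  rw [walksFrom]
  refine (Finset.card_biUnion_le_card_mul _ _ (d ^ k)
      fun e _ => Finset.card_image_le.trans (walks_card n d E hdeg k e.2)).trans ?_
  refine Nat.mul_le_mul_right _ ?_
  have : (E.filter (fun e => e.1 = s)).card ≤ (Finset.univ.erase s).card := by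
    refine Finset.card_le_card_of_injOn (fun e => e.2) ?_ ?_
    · intro e he
      simp at he ⊢
      intro h
      exact hloop e he.1 (he.2.trans h.symm)
    · intro e he f hf h
      simp at he hf
      exact Prod.ext (he.2.trans hf.2.symm) h
  simpa using this

lemma mem_walks (n : ℕ) (E : Finset (Fin n × Fin n)) (p : List (Fin n)) (s : Fin n)
    (hc : (s :: p).IsChain (fun a b => (a, b) ∈ E)) : (s :: p) ∈ walksFrom n E p.length s := by
  induction p generalizing s with
  | nil => simp [walksFrom]
  | cons a p ih =>
    rw [List.isChain_cons_cons] at hc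
    rw [List.length_cons, walksFrom]
    simp only [Finset.mem_biUnion, Finset.mem_image, Finset.mem_filter]
    exact ⟨(s, a), ⟨hc.1, rfl⟩, a :: p, ih a hc.2, rfl⟩

lemma Gset_cover (n d : ℕ) (hn : 2 ≤ n) (hd : 2 ≤ d) (E : Finset (Fin n × Fin n))
    (hloop : ∀ e ∈ E, e.1 ≠ e.2)
    (hdeg : ∀ u : Fin n, (E.filter (fun e => e.1 = u)).card ≤ d)
    (w : Fin n × Fin n → ℝ) (s : Fin n) :
    ∃ f : Fin (n * (n - 1) * d ^ (n - 2)) → Fin n × ℝ, Gset n E w s ⊆ Set.range f := by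
  classical
  let W := (Finset.range n).biUnion fun k => walksFrom n E k s
  have hW : W.card ≤ n * (n - 1) * d ^ (n - 2) := by
    obtain ⟨m, rfl⟩ : ∃ m, n = m + 2 := ⟨n - 2, by omega⟩
    refine Finset.card_biUnion_le.trans ?_
    rw [Finset.sum_range_succ']
    have h0 : (walksFrom (m + 2) E 0 s).card = 1 := by simp [walksFrom]
    have h1 : ∑ k ∈ Finset.range (m + 1), (walksFrom (m + 2) E (k + 1) s).card
        ≤ ∑ k ∈ Finset.range (m + 1), (m + 1) * d ^ m := by
      refine Finset.sum_le_sum fun k hk => ?_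
      refine (walks_card' (m + 2) d E hloop hdeg k s).trans ?_
      have : k ≤ m := by simpa [Nat.lt_succ_iff] using hk
      exact Nat.mul_le_mul (by omega) (Nat.pow_le_pow_right (by omega) this)
    rw [h0]
    simp at h1
    have h2 : 1 ≤ d ^ m := Nat.one_le_pow _ _ (by omega)
    simp only [Nat.add_sub_cancel, show m + 2 - 1 = m + 1 by omega]
    nlinarith [Nat.zero_le m, Nat.mul_le_mul_left (m + 1) h2]
  let F := W.image fun p => ((p.getLast?).getD s, pathCost n w p)
  have hF : F.card ≤ n * (n - 1) * d ^ (n - 2) := Finset.card_image_le.trans hW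
  have hsub : Gset n E w s ⊆ F := by
    rintro ⟨v, c⟩ ⟨p, ⟨hnd, hh, hl, hc⟩, hcost⟩
    simp only [F, Finset.coe_image, Set.mem_image, Finset.mem_coe]
    refine ⟨p, ?_, ?_⟩
    · cases p with
      | nil => simp at hh
      | cons a p =>
        simp at hh
        subst hh
        have hlen := hnd.length_le_card
        simp at hlen
        exact Finset.mem_biUnion.2 ⟨p.length, by simpa using hlen, mem_walks n E p a hc⟩
    · simp only at hl hcost
      simp [hl, hcost]
  refine ⟨fun i => if h : i.1 < F.card then (F.equivFin.symm ⟨i.1, h⟩ : Fin n × ℝ) else (s, 0), ?_⟩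
  intro y hy
  have hy' : y ∈ F := hsub hy
  refine ⟨⟨(F.equivFin ⟨y, hy'⟩).1, (F.equivFin ⟨y, hy'⟩).2.trans_le hF⟩, ?_⟩
  simp

lemma final_arith (n N : ℕ) (M : ℝ) (hn : 2 ≤ n) (hM : 1 ≤ M)
    (h : (2 : ℝ) ^ N ≤ (N * M ^ 2 + 1) ^ n) :
    (N : ℝ) ≤ 4 * n * Real.logb 2 (2 * Real.exp 1 * n * M ^ 2) := by
  have hn0 : (2 : ℝ) ≤ n := by exact_mod_cast hn
  have he : (1 : ℝ) ≤ Real.exp 1 := Real.one_le_exp (by norm_num)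
  have hM2 : 1 ≤ M ^ 2 := one_le_pow₀ hM
  have hnM : 2 ≤ n * M ^ 2 := by nlinarith
  have hmono : Real.logb 2 (2 * (n * M ^ 2)) ≤ Real.logb 2 (2 * Real.exp 1 * n * M ^ 2) := by
    apply Real.logb_le_logb_of_le (by norm_num) (by positivity)
    nlinarith
  have hB2 : 2 ≤ Real.logb 2 (2 * (n * M ^ 2)) := by
    rw [Real.le_logb_iff_rpow_le (by norm_num) (by positivity)]
    norm_num; linarith
  set B := Real.logb 2 (2 * (n * M ^ 2)) with hB
  rcases Nat.eq_zero_or_pos N with h0 | hpos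
  · subst h0
    have : 0 ≤ Real.logb 2 (2 * Real.exp 1 * n * M ^ 2) := by linarith
    simp; positivity
  have hN : (1 : ℝ) ≤ N := by exact_mod_cast hpos
  have h1 : (N : ℝ) ≤ n * Real.logb 2 (N * M ^ 2 + 1) := by
    have := Real.logb_le_logb_of_le (b := 2) (by norm_num) (by positivity) h
    rwa [Real.logb_pow, Real.logb_pow, Real.logb_self_eq_one (by norm_num), mul_one] at this
  set y : ℝ := N / n with hy
  have hy0 : 0 < y := by positivity
  have h2 : Real.logb 2 (N * M ^ 2 + 1) ≤ B + Real.logb 2 y := by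
    rw [hB, ← Real.logb_mul (by positivity) (by positivity)]
    apply Real.logb_le_logb_of_le (by norm_num) (by positivity)
    have : 2 * (n * M ^ 2) * y = 2 * (N * M ^ 2) := by rw [hy]; field_simp
    rw [this]; nlinarith
  have h3 : Real.logb 2 y ≤ y / 2 + 1 := by
    rw [Real.logb_le_iff_le_rpow (by norm_num) hy0, Real.rpow_add (by norm_num), Real.rpow_one]
    have h4 : y / 2 ≤ (2 : ℝ) ^ (y / 2) := by
      rw [Real.rpow_def_of_pos (by norm_num), mul_comm (Real.log 2)]
      have h7 := Real.add_one_le_exp (y / 2 * Real.log 2 - 1)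
      have h8 := Real.add_one_le_exp (1 : ℝ)
      have h9 : Real.exp (y / 2 * Real.log 2)
          = Real.exp (y / 2 * Real.log 2 - 1) * Real.exp 1 := by
        rw [← Real.exp_add]; congr 1; ring
      have h10 := Real.log_two_gt_d9
      have h11 : y / 4 ≤ y / 2 * Real.log 2 := by nlinarith
      rw [h9]
      nlinarith [Real.exp_pos (y / 2 * Real.log 2 - 1)]
    linarith
  have h5 : y ≤ B + (y / 2 + 1) := by
    have : y ≤ Real.logb 2 (N * M ^ 2 + 1) := by
      rw [hy, div_le_iff₀ (by positivity)]; linarith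
    linarith
  have h6 : y ≤ 4 * Real.logb 2 (2 * Real.exp 1 * n * M ^ 2) := by linarith
  rw [hy, div_le_iff₀ (by positivity)] at h6
  linarith

/-- pseudo-dimension bound for A* on instances whose graphs have
out-degree at most `d`: any pairwise-distinct pseudo-shattered set of size `N`
satisfies `N ≤ 4n·log₂(2e·n·(n(n-1)d^(n-2))²)`, i.e. `Pdim = O(n² lg d)`. -/
theorem stmt_5 (n d : ℕ) (hn : 2 ≤ n) (hd : 2 ≤ d) (P : Type*)
    (E : P → Finset (Fin n × Fin n))
    (hloop : ∀ x : P, ∀ e ∈ E x, e.1 ≠ e.2)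
    (hdeg : ∀ x : P, ∀ u : Fin n, ((E x).filter (fun e => e.1 = u)).card ≤ d)
    (w : P → Fin n × Fin n → ℝ)
    (hw : ∀ x : P, ∀ e ∈ E x, 0 ≤ w x e)
    (s : P → Fin n)
    (u : (Fin n → ℝ) → P → ℝ)
    (hinv : ∀ (x : P) (ρ ρ' : Fin n → ℝ),
      (∀ vg ∈ Gset n (E x) (w x) (s x), ∀ vg' ∈ Gset n (E x) (w x) (s x),
        (vg.2 + ρ vg.1 ≤ vg'.2 + ρ vg'.1 ↔ vg.2 + ρ' vg.1 ≤ vg'.2 + ρ' vg'.1)) →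
      u ρ x = u ρ' x)
    (N : ℕ) (x : Fin N → P) (hx : Function.Injective x)
    (hshatter : ∃ z : Fin N → ℝ, ∀ b : Fin N → Bool, ∃ ρ : Fin n → ℝ,
      ∀ i : Fin N, (z i ≤ u ρ (x i) ↔ b i = true)) :
    (N : ℝ) ≤ 4 * n *
      Real.logb 2 (2 * Real.exp 1 * n *
        ((n : ℝ) * ((n : ℝ) - 1) * (d : ℝ) ^ (n - 2)) ^ 2) := by
  classical
  obtain ⟨z, hz⟩ := hshatter
  choose r hr using hz
  have hcov := fun i : Fin N =>
    Gset_cover n d hn hd (E (x i)) (hloop (x i)) (hdeg (x i)) (w (x i)) (s (x i))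
  obtain ⟨M, hM⟩ : ∃ M, M = n * (n - 1) * d ^ (n - 2) := ⟨_, rfl⟩
  rw [← hM] at hcov
  choose f hf using hcov
  let L : Fin N × Fin M × Fin M → Module.Dual ℝ (Fin n → ℝ) := fun t =>
    (LinearMap.proj (R := ℝ) (φ := fun _ : Fin n => ℝ) (f t.1 t.2.1).1
      - LinearMap.proj (R := ℝ) (φ := fun _ : Fin n => ℝ) (f t.1 t.2.2).1 :
      (Fin n → ℝ) →ₗ[ℝ] ℝ)
  let c : Fin N × Fin M × Fin M → ℝ := fun t => (f t.1 t.2.2).2 - (f t.1 t.2.1).2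
  let S : (Fin N → Bool) → Finset (Fin N × Fin M × Fin M) := fun b =>
    Finset.univ.filter fun t => L t (r b) ≤ c t
  have hmem : ∀ b i a a', (i, a, a') ∈ S b ↔
      r b (f i a).1 - r b (f i a').1 ≤ (f i a').2 - (f i a).2 := by
    intro b i a a'
    exact Finset.mem_filter.trans ⟨fun h => h.2, fun h => ⟨Finset.mem_univ _, h⟩⟩
  have hS : Function.Injective S := by
    intro b b' h
    funext i
    have hu : u (r b) (x i) = u (r b') (x i) := by
      apply hinv
      intro vg hvg vg' hvg'
      obtain ⟨a, rfl⟩ := hf i hvg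
      obtain ⟨a', rfl⟩ := hf i hvg'
      have h1 : (i, a, a') ∈ S b ↔ (i, a, a') ∈ S b' := by rw [h]
      rw [hmem, hmem] at h1
      constructor
      · intro h2
        have := h1.1 (by linarith)
        linarith
      · intro h2
        have := h1.2 (by linarith)
        linarith
    have h1 := hr b i
    have h2 := hr b' i
    rw [hu] at h1
    rw [Bool.eq_iff_iff, ← h1, ← h2]
  have hcard := family_card_le n L c (Finset.univ.image S) (by
    intro T hT
    obtain ⟨b, -, rfl⟩ := Finset.mem_image.1 hT
    exact ⟨r b, fun j => by simp [S]⟩)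
  rw [Finset.card_image_of_injective _ hS] at hcard
  simp at hcard
  have hMr : (n : ℝ) * ((n : ℝ) - 1) * (d : ℝ) ^ (n - 2) = (M : ℝ) := by
    rw [hM]
    push_cast [Nat.cast_sub (show 1 ≤ n by omega)]
    ring
  rw [hMr]
  apply final_arith n N M hn
  · have : 0 < M := by
      have : 0 < n - 1 := by omega
      rw [hM]
      positivity
    exact_mod_cast this
  · have : 2 ^ N ≤ (N * M ^ 2 + 1) ^ n := by rw [sq]; exact hcard
    exact_mod_cast this
end

section
/- Let n ≥ 2 and ℓ ≥ 1 be integers, and let Π be a set where each x ∈ Π is a path-finding instance consisting of a directed graph on vertex set V = {1,…,n} with edge set E_x ⊆ V×V (no self-loops), edge weights w_x : E_x → {0, 1, …, ℓ} taking non-negative integer values at most ℓ, and a start vertex s_x ∈ V. For x ∈ Π define G(x) = {(v, c) ∈ V × ℝ : c is the cost of some simple directed path from s_x to v in x}. For each ρ ∈ ℝⁿ let u_ρ : Π → ℝ and assume the score-order invariance: for every x ∈ Π and every ρ, ρ' ∈ ℝⁿ, if for all (v, g), (v', g') ∈ G(x) one has g + ρ_v ≤ g' + ρ_{v'} ⟺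 g + ρ'_v ≤ g' + ρ'_{v'}, then u_ρ(x) = u_{ρ'}(x). Then any pairwise distinct x_1, …, x_N ∈ Π pseudo-shattered by U = {u_ρ : ρ ∈ ℝⁿ} satisfy N ≤ 4n·log₂(2e·n·(n²ℓ)²); in particular the pseudo-dimension of U is O(n lg(nℓ)), and is O(n lg n) when ℓ is polynomial in n. -/
open Finset in
/-- The compressed integer position. -/
noncomputable def compS {n : ℕ} (M : ℕ) (f : Fin n → ℤ) : Finset ℤ :=
  univ.biUnion fun v => Ico (f v) (f v + (M + 1))

open Finset in
/-- The compressed integer position. -/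
noncomputable def compF {n : ℕ} (M : ℕ) (f : Fin n → ℤ) (v : Fin n) : ℕ :=
  ((compS M f).filter (· < f v)).card

open Finset in
/-- The rank of an entry of a real vector. -/
noncomputable def rk {n : ℕ} (t : Fin n → ℝ) (v : Fin n) : ℕ :=
  (univ.filter fun v' => t v' < t v).card

open Finset in
theorem compF_le {n : ℕ} (M : ℕ) (f : Fin n → ℤ) (v : Fin n) : compF M f v ≤ n * (M + 1) := by
  unfold compF compS
  refine (card_filter_le _ _).trans ?_
  have h := card_biUnion_le_card_mul (univ : Finset (Fin n))
    (fun v => Ico (f v) (f v + (M + 1))) (M + 1) (by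
      intro v _
      rw [Int.card_Ico]; omega)
  simpa using h

open Finset in
theorem rk_lt {n : ℕ} (t : Fin n → ℝ) (v : Fin n) : rk t v < n := by
  unfold rk
  have : (univ.filter fun v' => t v' < t v) ⊂ univ := by
    rw [filter_ssubset]
    exact ⟨v, mem_univ _, lt_irrefl _⟩
  simpa using card_lt_card this

open Finset in
theorem rk_le_iff {n : ℕ} (t : Fin n → ℝ) (v v' : Fin n) : rk t v ≤ rk t v' ↔ t v ≤ t v' := by
  constructor
  · intro h
    by_contra! hc
    refine absurd h (not_le.2 ?_)
    unfold rk
    apply card_lt_card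
    rw [Finset.ssubset_iff_of_subset]
    · exact ⟨v', by simpa using hc, by simp⟩
    · intro a ha
      simp only [mem_filter, mem_univ, true_and] at ha ⊢
      exact ha.trans hc
  · intro h
    unfold rk
    apply card_le_card
    intro a ha
    simp only [mem_filter, mem_univ, true_and] at ha ⊢
    exact ha.trans_le h

open Finset in
theorem compF_key {n : ℕ} (M : ℕ) (f : Fin n → ℤ) (v v' : Fin n) (h : f v' ≤ f v) :
    (f v - f v' ≤ M + 1 → (compF M f v : ℤ) - compF M f v' = f v - f v') ∧
    ((M : ℤ) + 1 ≤ f v - f v' → (M : ℤ) + 1 ≤ (compF M f v : ℤ) - compF M f v') := by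
  have hsplit : compF M f v = compF M f v' +
      ((compS M f).filter (fun j => f v' ≤ j ∧ j < f v)).card := by
    unfold compF
    rw [← card_union_of_disjoint]
    · congr 1
      ext j
      simp only [mem_filter, mem_union]
      constructor
      · rintro ⟨h1, h2⟩
        by_cases h3 : j < f v'
        · exact Or.inl ⟨h1, h3⟩
        · exact Or.inr ⟨h1, not_lt.1 h3, h2⟩
      · rintro (⟨h1, h2⟩ | ⟨h1, h2, h3⟩)
        · exact ⟨h1, h2.trans_le h⟩
        · exact ⟨h1, h3⟩
    · rw [disjoint_filter]
      intro j _ h1 h2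
      omega
  have hsub : Ico (f v') (min (f v) (f v' + (M + 1))) ⊆
      (compS M f).filter (fun j => f v' ≤ j ∧ j < f v) := by
    intro j hj
    simp only [mem_Ico, lt_min_iff] at hj
    simp only [mem_filter, compS, mem_biUnion, mem_univ, true_and, mem_Ico]
    exact ⟨⟨v', hj.1, hj.2.2⟩, hj.1, hj.2.1⟩
  have h1 := card_le_card hsub
  have h2 : ((compS M f).filter (fun j => f v' ≤ j ∧ j < f v)).card ≤ (Ico (f v') (f v)).card := by
    apply card_le_card
    intro j hj
    simp only [mem_filter] at hj
    simpa using hj.2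
  rw [Int.card_Ico] at h1 h2
  constructor <;> intro h3 <;> omega

theorem cmp_iff {n : ℕ} (M : ℕ) (ρ : Fin n → ℝ) (v v' : Fin n) (g g' : ℕ) (hg : g ≤ M)
    (hg' : g' ≤ M) :
    ((g : ℝ) + ρ v ≤ g' + ρ v') ↔
      (g + compF M (fun a => ⌊ρ a⌋) v < g' + compF M (fun a => ⌊ρ a⌋) v' ∨
        (g + compF M (fun a => ⌊ρ a⌋) v = g' + compF M (fun a => ⌊ρ a⌋) v' ∧
          rk (fun a => Int.fract (ρ a)) v ≤ rk (fun a => Int.fract (ρ a)) v')) := by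
  have h0 : ((g : ℝ) + ρ v ≤ g' + ρ v') ↔ ((g : ℤ) + ⌊ρ v⌋ < g' + ⌊ρ v'⌋ ∨
      ((g : ℤ) + ⌊ρ v⌋ = g' + ⌊ρ v'⌋ ∧ Int.fract (ρ v) ≤ Int.fract (ρ v'))) := by
    have a1 := Int.floor_add_fract (ρ v)
    have a2 := Int.floor_add_fract (ρ v')
    have b1 := Int.fract_nonneg (ρ v)
    have b2 := Int.fract_nonneg (ρ v')
    have c1 := Int.fract_lt_one (ρ v)
    have c2 := Int.fract_lt_one (ρ v')
    rcases lt_trichotomy ((g : ℤ) + ⌊ρ v⌋) (g' + ⌊ρ v'⌋) with h | h | h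
    · have h' : (g : ℝ) + ⌊ρ v⌋ + 1 ≤ g' + ⌊ρ v'⌋ := by exact_mod_cast h
      simp only [h, true_or, iff_true]
      linarith
    · have h' : (g : ℝ) + ⌊ρ v⌋ = g' + ⌊ρ v'⌋ := by exact_mod_cast h
      simp only [h, lt_irrefl, true_and, false_or]
      constructor <;> intro <;> linarith
    · have h' : (g' : ℝ) + ⌊ρ v'⌋ + 1 ≤ g + ⌊ρ v⌋ := by exact_mod_cast h
      simp only [h.not_gt, h.ne', false_and, or_false, iff_false, not_le]
      linarith
  rw [h0, rk_le_iff]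
  have k1 := compF_key M (fun a => ⌊ρ a⌋) v v'
  have k2 := compF_key M (fun a => ⌊ρ a⌋) v' v
  have e1 : ((g : ℤ) + ⌊ρ v⌋ < g' + ⌊ρ v'⌋) ↔
      g + compF M (fun a => ⌊ρ a⌋) v < g' + compF M (fun a => ⌊ρ a⌋) v' := by
    rcases le_total ⌊ρ v'⌋ ⌊ρ v⌋ with h | h
    · have := k1 h; omega
    · have := k2 h; omega
  have e2 : ((g : ℤ) + ⌊ρ v⌋ = g' + ⌊ρ v'⌋) ↔
      g + compF M (fun a => ⌊ρ a⌋) v = g' + compF M (fun a => ⌊ρ a⌋) v' := by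
    rcases le_total ⌊ρ v'⌋ ⌊ρ v⌋ with h | h
    · have := k1 h; omega
    · have := k2 h; omega
  rw [e1, e2]

theorem cost_nat {n : ℕ} (ℓ : ℕ) (E : Finset (Fin n × Fin n)) (w : Fin n × Fin n → ℝ)
    (hw : ∀ e ∈ E, ∃ k : ℕ, k ≤ ℓ ∧ w e = (k : ℝ)) (p : List (Fin n))
    (hp : List.IsChain (fun a b => (a, b) ∈ E) p) :
    ∃ k : ℕ, k ≤ p.length * ℓ ∧ pathCost n w p = k := by
  induction p with
  | nil => exact ⟨0, by simp, by simp [pathCost]⟩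
  | cons a q ih =>
    cases q with
    | nil => exact ⟨0, by simp, by simp [pathCost]⟩
    | cons b r =>
      rw [List.isChain_cons_cons] at hp
      obtain ⟨k, hk, hk'⟩ := ih hp.2
      obtain ⟨m, hm, hm'⟩ := hw _ hp.1
      refine ⟨m + k, ?_, ?_⟩
      · rw [List.length_cons, Nat.succ_mul]; omega
      · simp only [pathCost, List.tail_cons, List.zip_cons_cons, List.map_cons, List.sum_cons]
          at hk' ⊢
        rw [hk', hm']; push_cast; ring

theorem Gset_nat {n : ℕ} (ℓ : ℕ) (E : Finset (Fin n × Fin n)) (w : Fin n × Fin n → ℝ)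
    (hw : ∀ e ∈ E, ∃ k : ℕ, k ≤ ℓ ∧ w e = (k : ℝ)) (s : Fin n) (vg : Fin n × ℝ)
    (h : vg ∈ Gset n E w s) : ∃ k : ℕ, k ≤ n * ℓ ∧ vg.2 = k := by
  obtain ⟨p, ⟨h1, _, _, h4⟩, h5⟩ := h
  obtain ⟨k, hk, hk'⟩ := cost_nat ℓ E w hw p h4
  refine ⟨k, hk.trans (Nat.mul_le_mul_right _ ?_), h5 ▸ hk'⟩
  simpa using h1.length_le_card

/-- pseudo-dimension bound for A* on instances with non-negative integer
edge weights bounded by `ℓ`: any pairwise-distinct pseudo-shattered set of size `N`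
satisfies `N ≤ 4n·log₂(2e·n·(n²ℓ)²)`, i.e. `Pdim = O(n lg (nℓ))`. -/
theorem stmt_7 (n ℓ : ℕ) (hn : 2 ≤ n) (hℓ : 1 ≤ ℓ) (P : Type*)
    (E : P → Finset (Fin n × Fin n))
    (hloop : ∀ x : P, ∀ e ∈ E x, e.1 ≠ e.2)
    (w : P → Fin n × Fin n → ℝ)
    (hw : ∀ x : P, ∀ e ∈ E x, ∃ k : ℕ, k ≤ ℓ ∧ w x e = (k : ℝ))
    (s : P → Fin n)
    (u : (Fin n → ℝ) → P → ℝ)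
    (hinv : ∀ (x : P) (ρ ρ' : Fin n → ℝ),
      (∀ vg ∈ Gset n (E x) (w x) (s x), ∀ vg' ∈ Gset n (E x) (w x) (s x),
        (vg.2 + ρ vg.1 ≤ vg'.2 + ρ vg'.1 ↔ vg.2 + ρ' vg.1 ≤ vg'.2 + ρ' vg'.1)) →
      u ρ x = u ρ' x)
    (N : ℕ) (x : Fin N → P) (hx : Function.Injective x)
    (hshatter : ∃ z : Fin N → ℝ, ∀ b : Fin N → Bool, ∃ ρ : Fin n → ℝ,
      ∀ i : Fin N, (z i ≤ u ρ (x i) ↔ b i = true)) :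
    (N : ℝ) ≤ 4 * n *
      Real.logb 2 (2 * Real.exp 1 * n * ((n : ℝ) ^ 2 * (ℓ : ℝ)) ^ 2) := by
  obtain ⟨z, hz⟩ := hshatter
  choose R hR using hz
  let code : (Fin N → Bool) → (Fin n → Fin (n * (n * ℓ + 1) + 1) × Fin n) := fun b v =>
    (⟨compF (n * ℓ) (fun a => ⌊R b a⌋) v, Nat.lt_succ_of_le (compF_le _ _ _)⟩,
      ⟨rk (fun a => Int.fract (R b a)) v, rk_lt _ _⟩)
  have hinj : Function.Injective code := by
    intro b b' hb
    have hF : ∀ v, compF (n * ℓ) (fun a => ⌊R b a⌋) v = compF (n * ℓ) (fun a => ⌊R b' a⌋) v :=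
      fun v => congrArg (fun c => (c v).1.val) hb
    have hT : ∀ v, rk (fun a => Int.fract (R b a)) v = rk (fun a => Int.fract (R b' a)) v :=
      fun v => congrArg (fun c => (c v).2.val) hb
    funext i
    have hu : u (R b) (x i) = u (R b') (x i) := by
      apply hinv
      intro vg hvg vg' hvg'
      obtain ⟨g, hg, hg2⟩ := Gset_nat ℓ _ _ (hw (x i)) _ _ hvg
      obtain ⟨g', hg', hg2'⟩ := Gset_nat ℓ _ _ (hw (x i)) _ _ hvg'
      rw [hg2, hg2', cmp_iff (n * ℓ) (R b) _ _ g g' hg hg',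
        cmp_iff (n * ℓ) (R b') _ _ g g' hg hg', hF, hF, hT, hT]
    have h1 := hR b i
    have h2 := hR b' i
    rw [hu] at h1
    exact Bool.eq_iff_iff.2 (h1.symm.trans h2)
  have hcard := Fintype.card_le_of_injective code hinj
  simp only [Fintype.card_pi_const, Fintype.card_fun, Fintype.card_prod, Fintype.card_fin,
    Fintype.card_bool] at hcard
  set B : ℝ := 2 * Real.exp 1 * n * ((n : ℝ) ^ 2 * (ℓ : ℝ)) ^ 2 with hB
  have hn' : (2 : ℝ) ≤ n := by exact_mod_cast hn
  have hℓ' : (1 : ℝ) ≤ ℓ := by exact_mod_cast hℓ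
  have hexp : (1 : ℝ) ≤ Real.exp 1 := Real.one_le_exp (by norm_num)
  have hn5 : (0 : ℝ) ≤ n := by linarith
  have hCB : (((n * (n * ℓ + 1) + 1) * n : ℕ) : ℝ) ≤ B := by
    have hnl : (1 : ℝ) ≤ n ^ 2 * ℓ := by nlinarith
    have s1 : 2 * ((n : ℝ) * (n ^ 2 * ℓ) ^ 2) ≤ B := by
      rw [hB]
      have : 0 ≤ ((n : ℝ) * (n ^ 2 * ℓ) ^ 2) := by positivity
      nlinarith
    refine le_trans ?_ s1
    push_cast
    have s2 : (n : ℝ) + 1 ≤ n ^ 2 * ℓ := by nlinarith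
    have s3 : (n : ℝ) * (n * ℓ + 1) + 1 ≤ 2 * (n ^ 2 * ℓ) := by nlinarith
    have s4 : (n ^ 2 * ℓ : ℝ) ≤ (n ^ 2 * ℓ) ^ 2 := by nlinarith
    nlinarith
  have hC1 : (1 : ℝ) ≤ (((n * (n * ℓ + 1) + 1) * n : ℕ) : ℝ) := by
    have : 1 ≤ (n * (n * ℓ + 1) + 1) * n := Nat.mul_pos (Nat.succ_pos _) (by omega)
    exact_mod_cast this
  have hB1 : 1 ≤ B := hC1.trans hCB
  have hpow : (2 : ℝ) ^ N ≤ B ^ n := by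
    have h1 : (2 : ℝ) ^ N ≤ (((n * (n * ℓ + 1) + 1) * n : ℕ) : ℝ) ^ n := by exact_mod_cast hcard
    exact h1.trans (pow_le_pow_left₀ (by linarith) hCB n)
  have hlog := Real.logb_le_logb_of_le (b := 2) (by norm_num) (by positivity) hpow
  rw [Real.logb_pow, Real.logb_pow, Real.logb_self_eq_one (by norm_num), mul_one] at hlog
  have hL : 0 ≤ Real.logb 2 B := Real.logb_nonneg (by norm_num) hB1
  have := mul_nonneg hn5 hL
  linarith
end

section
/- Let m ≥ n ≥ 1 be integers and let f_1, …, f_m : ℝⁿ → ℝ be affine functions, f_i(x) = ⟨a_i, x⟩ + b_i with a_i ∈ ℝⁿ and b_i ∈ ℝ. Then the number of distinct sign vectors (sgn(f_1(x)), …, sgn(f_m(x))) ∈ {−1, 0, +1}^m realized as x ranges over ℝⁿ is at most 2·(e·m)ⁿ, where sgn(t) = −1 if t < 0, 0 if t = 0, and +1 if t > 0. -/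
/-- The recursive face-count bound. -/
def faceBound (n m : ℕ) : ℕ := ∑ k ∈ Finset.range (n + 1), m.choose k * 2 ^ k

/-- Sign vectors realized by a family of affine functions. -/
def signVecs {E : Type} [AddCommGroup E] [Module ℝ E] {m : ℕ}
    (l : Fin m → E →ₗ[ℝ] ℝ) (b : Fin m → ℝ) : Set (Fin m → SignType) :=
  {s | ∃ x : E, ∀ i, s i = SignType.sign (l i x + b i)}

theorem faceBound_mono (n m : ℕ) : faceBound n m ≤ faceBound n (m + 1) := by
  unfold faceBound
  apply Finset.sum_le_sum
  intro k _
  exact Nat.mul_le_mul_right _ (Nat.choose_le_choose k (Nat.le_succ m))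

theorem faceBound_succ (n m : ℕ) :
    faceBound (n + 1) (m + 1) = faceBound (n + 1) m + 2 * faceBound n m := by
  unfold faceBound
  rw [Finset.sum_range_succ' _ (n + 1), Finset.sum_range_succ' _ (n + 1), Finset.mul_sum]
  simp only [Nat.choose_succ_succ, add_mul, Finset.sum_add_distrib, Nat.choose_zero_right]
  have : ∑ x ∈ Finset.range (n + 1), m.choose x * 2 ^ (x + 1)
      = ∑ x ∈ Finset.range (n + 1), 2 * (m.choose x * 2 ^ x) :=
    Finset.sum_congr rfl (fun x _ => by ring)
  rw [this]
  ring

theorem one_le_faceBound (n m : ℕ) : 1 ≤ faceBound n m := by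
  unfold faceBound
  rw [Finset.sum_range_succ']
  simp

theorem sign_comb {u v s t : ℝ} (hs : 0 < s) (ht : 0 < t)
    (h : SignType.sign u = SignType.sign v) :
    SignType.sign (s * u + t * v) = SignType.sign u := by
  rcases lt_trichotomy u 0 with hu | hu | hu
  · rw [sign_neg hu] at h ⊢
    have hv : v < 0 := sign_eq_neg_one_iff.1 h.symm
    exact sign_neg (by nlinarith [mul_pos hs (neg_pos.2 hu), mul_pos ht (neg_pos.2 hv)])
  · subst hu
    rw [sign_zero] at h
    have hv : v = 0 := sign_eq_zero_iff.1 h.symm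
    simp [hv]
  · rw [sign_pos hu] at h ⊢
    have hv : 0 < v := sign_eq_one_iff.1 h.symm
    exact sign_pos (by positivity)

theorem ncard_split {m : ℕ} (N : Set (Fin (m + 1) → SignType)) :
    N.ncard ≤ {s | Fin.cons 1 s ∈ N}.ncard + {s | Fin.cons (-1) s ∈ N}.ncard
      + {s : Fin m → SignType | (Fin.cons 0 s : Fin (m + 1) → SignType) ∈ N}.ncard := by
  have hsub : N ⊆ ((fun s : Fin m → SignType => (Fin.cons 1 s : Fin (m + 1) → SignType)) ''
        {s | Fin.cons 1 s ∈ N}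
      ∪ (fun s : Fin m → SignType => (Fin.cons (-1) s : Fin (m + 1) → SignType)) ''
        {s | Fin.cons (-1) s ∈ N})
      ∪ (fun s : Fin m → SignType => (Fin.cons 0 s : Fin (m + 1) → SignType)) ''
        {s | Fin.cons 0 s ∈ N} := by
    intro s hs
    have hc : (Fin.cons (s 0) (Fin.tail s) : Fin (m + 1) → SignType) = s := Fin.cons_self_tail s
    rcases SignType.trichotomy (s 0) with h | h | h
    · rw [h] at hc
      exact Or.inl (Or.inr ⟨Fin.tail s, by simpa [hc] using hs, hc⟩)
    · rw [h] at hc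
      exact Or.inr ⟨Fin.tail s, by simpa [hc] using hs, hc⟩
    · rw [h] at hc
      exact Or.inl (Or.inl ⟨Fin.tail s, by simpa [hc] using hs, hc⟩)
  refine (Set.ncard_le_ncard hsub (Set.toFinite _)).trans ?_
  refine (Set.ncard_union_le _ _).trans ?_
  refine Nat.add_le_add ((Set.ncard_union_le _ _).trans (Nat.add_le_add ?_ ?_)) ?_ <;>
  exact Set.ncard_image_le (Set.toFinite _)

theorem signVecs_card (m : ℕ) : ∀ (n : ℕ) (E : Type) [AddCommGroup E] [Module ℝ E]
    [FiniteDimensional ℝ E] (_ : Module.finrank ℝ E ≤ n)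
    (l : Fin m → E →ₗ[ℝ] ℝ) (b : Fin m → ℝ),
    (signVecs l b).ncard ≤ faceBound n m := by
  induction m with
  | zero =>
    intro n E _ _ _ _ l b
    refine le_trans ?_ (one_le_faceBound n 0)
    exact Set.ncard_le_one_of_subsingleton _
  | succ m ih =>
    intro n E _ _ _ hE l b
    have key := ih n E hE (fun i => l i.succ) (fun i => b i.succ)
    set A := signVecs (fun i : Fin m => l i.succ) (fun i => b i.succ) with hA
    by_cases h0 : l 0 = 0
    · refine le_trans ?_ (key.trans (faceBound_mono n m))
      have hsub : signVecs l b ⊆ (fun s : Fin m → SignType =>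
          (Fin.cons (SignType.sign (b 0)) s : Fin (m + 1) → SignType)) '' A := by
        rintro s ⟨x, hx⟩
        refine ⟨Fin.tail s, ⟨x, fun i => hx i.succ⟩, ?_⟩
        have : SignType.sign (b 0) = s 0 := by rw [hx 0, h0]; simp
        simp only [this, Fin.cons_self_tail]
      exact (Set.ncard_le_ncard hsub (Set.toFinite _)).trans (Set.ncard_image_le (Set.toFinite _))
    · obtain ⟨v, hv⟩ : ∃ v, l 0 v ≠ 0 := by
        by_contra hcon
        push Not at hcon
        exact h0 (LinearMap.ext hcon)
      obtain ⟨w, hw⟩ : ∃ w, l 0 w + b 0 = 0 := by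
        refine ⟨(-(b 0) / l 0 v) • v, ?_⟩
        rw [map_smul, smul_eq_mul]
        field_simp
        ring
      have hker : Module.finrank ℝ (LinearMap.ker (l 0)) < Module.finrank ℝ E := by
        apply Submodule.finrank_lt
        intro htop
        exact h0 (LinearMap.ker_eq_top.1 htop)
      obtain ⟨n, rfl⟩ : ∃ k, n = k + 1 := ⟨n - 1, by omega⟩
      have keyB := ih n (LinearMap.ker (l 0)) (by omega)
        (fun i => (l i.succ).comp (LinearMap.ker (l 0)).subtype)
        (fun i => l i.succ w + b i.succ)
      set B := signVecs (fun i : Fin m => (l i.succ).comp (LinearMap.ker (l 0)).subtype)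
        (fun i => l i.succ w + b i.succ) with hB
      have memB : ∀ (s : Fin m → SignType) (z : E), l 0 z + b 0 = 0 →
          (∀ i, s i = SignType.sign (l i.succ z + b i.succ)) → s ∈ B := by
        intro s z hz hs
        refine ⟨⟨z - w, ?_⟩, fun i => ?_⟩
        · rw [LinearMap.mem_ker, map_sub]
          linarith
        · rw [hs i]
          congr 1
          simp
          ring
      have hsplit := ncard_split (signVecs l b)
      set P := {s : Fin m → SignType | (Fin.cons 1 s : Fin (m + 1) → SignType) ∈ signVecs l b}
        with hP
      set Q := {s : Fin m → SignType | (Fin.cons (-1) s : Fin (m + 1) → SignType) ∈ signVecs l b}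
        with hQ
      set Z := {s : Fin m → SignType | (Fin.cons 0 s : Fin (m + 1) → SignType) ∈ signVecs l b}
        with hZ
      have hZB : Z ⊆ B := by
        rintro s ⟨x, hx⟩
        refine memB s x ?_ (fun i => by simpa using hx i.succ)
        exact sign_eq_zero_iff.1 (by simpa using (hx 0).symm)
      have hPQA : P ∪ Q ⊆ A := by
        rintro s (⟨x, hx⟩ | ⟨x, hx⟩) <;>
        exact ⟨x, fun i => by simpa using hx i.succ⟩
      have hPQB : P ∩ Q ⊆ B := by
        rintro s ⟨⟨x, hx⟩, ⟨y, hy⟩⟩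
        have hx0 : 0 < l 0 x + b 0 := sign_eq_one_iff.1 (by simpa using (hx 0).symm)
        have hy0 : l 0 y + b 0 < 0 := sign_eq_neg_one_iff.1 (by simpa using (hy 0).symm)
        set p := l 0 x + b 0 with hp
        set q := l 0 y + b 0 with hq
        have hd : 0 < p - q := by linarith
        have hs : 0 < -q / (p - q) := div_pos (by linarith) hd
        have ht : 0 < p / (p - q) := div_pos hx0 hd
        have hst : -q / (p - q) + p / (p - q) = 1 := by field_simp; ring
        have hval : -q / (p - q) * p + p / (p - q) * q = 0 := by field_simp; ring
        set σ := -q / (p - q)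
        set τ := p / (p - q)
        have comb : ∀ i, l i (σ • x + τ • y) + b i
            = σ * (l i x + b i) + τ * (l i y + b i) := by
          intro i
          simp only [map_add, map_smul, smul_eq_mul]
          linear_combination -(b i) * hst
        refine memB s (σ • x + τ • y) (by rw [comb]; exact hval) (fun i => ?_)
        have h1 : s i = SignType.sign (l i.succ x + b i.succ) := by simpa using hx i.succ
        have h2 : s i = SignType.sign (l i.succ y + b i.succ) := by simpa using hy i.succ
        rw [comb, sign_comb hs ht (h1.symm.trans h2), h1]
      have e1 := Set.ncard_union_add_ncard_inter P Q (Set.toFinite _) (Set.toFinite _)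
      have e2 := Set.ncard_le_ncard hPQA (Set.toFinite _)
      have e3 := Set.ncard_le_ncard hPQB (Set.toFinite _)
      have e4 := Set.ncard_le_ncard hZB (Set.toFinite _)
      rw [faceBound_succ]
      omega

theorem faceBound_real (n m : ℕ) (hn : 1 ≤ n) (hnm : n ≤ m) :
    (faceBound n m : ℝ) ≤ 2 * (Real.exp 1 * m) ^ n := by
  have hm : (1 : ℝ) ≤ m := by exact_mod_cast hn.trans hnm
  have he : (2 : ℝ) ≤ Real.exp 1 := by linarith [Real.add_one_le_exp (1 : ℝ)]
  rcases hn.eq_or_lt with h1 | h2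
  · subst h1
    simp [faceBound, Finset.sum_range_succ]
    nlinarith
  · have hle : (faceBound n m : ℝ) ≤ (m : ℝ) ^ n * Real.exp 2 := by
      have hexp := Real.sum_le_exp_of_nonneg (x := 2) (by norm_num) (n + 1)
      refine le_trans ?_ (mul_le_mul_of_nonneg_left hexp (by positivity))
      unfold faceBound
      push_cast
      rw [Finset.mul_sum]
      apply Finset.sum_le_sum
      intro k hk
      have hc : (m.choose k : ℝ) ≤ (m : ℝ) ^ k / (k.factorial : ℝ) := Nat.choose_le_pow_div k m
      have hk' : (m : ℝ) ^ k ≤ (m : ℝ) ^ n :=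
        pow_le_pow_right₀ hm (by have := Finset.mem_range.1 hk; omega)
      calc (m.choose k : ℝ) * 2 ^ k ≤ (m : ℝ) ^ k / (k.factorial : ℝ) * 2 ^ k := by gcongr
        _ ≤ (m : ℝ) ^ n / (k.factorial : ℝ) * 2 ^ k := by gcongr
        _ = _ := by ring
    have h3 : Real.exp 2 ≤ Real.exp 1 ^ n := by
      rw [← Real.exp_nat_mul]
      apply Real.exp_le_exp.2
      have : (2 : ℝ) ≤ n := by exact_mod_cast h2
      linarith
    rw [mul_pow]
    have h4 : (m : ℝ) ^ n * Real.exp 2 ≤ (m : ℝ) ^ n * Real.exp 1 ^ n := by gcongr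
    have h5 : 0 ≤ (m : ℝ) ^ n * Real.exp 1 ^ n := by positivity
    linarith

theorem real_sign_eq (x : ℝ) : Real.sign x = ((SignType.sign x : SignType) : ℝ) := by
  rcases lt_trichotomy x 0 with h | h | h
  · simp [Real.sign_of_neg h, sign_neg h]
  · simp [h]
  · simp [Real.sign_of_pos h, sign_pos h]

/-- `m ≥ n ≥ 1` affine functions on `ℝⁿ` realize at most `2·(e·m)ⁿ`
distinct sign vectors in `{-1, 0, +1}^m` (the faces of a hyperplane arrangement). -/
theorem stmt_8 (n m : ℕ) (hn : 1 ≤ n) (hnm : n ≤ m)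
    (a : Fin m → Fin n → ℝ) (b : Fin m → ℝ) :
    ({sv : Fin m → ℝ | ∃ x : Fin n → ℝ,
        ∀ i : Fin m, sv i = Real.sign (∑ j, a i j * x j + b i)}.ncard : ℝ)
      ≤ 2 * (Real.exp 1 * m) ^ n := by
  refine le_trans ?_ (faceBound_real n m hn hnm)
  have key := signVecs_card m n (Fin n → ℝ) (by simp)
    (fun i => ∑ j, a i j • (LinearMap.proj j : (Fin n → ℝ) →ₗ[ℝ] ℝ)) b
  refine Nat.cast_le.2 (le_trans ?_ key)
  refine le_trans (Set.ncard_le_ncard (t := (fun (s : Fin m → SignType) (i : Fin m) =>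
    ((s i : SignType) : ℝ)) '' _) ?_ (Set.toFinite _)) (Set.ncard_image_le (Set.toFinite _))
  rintro sv ⟨x, hx⟩
  refine ⟨fun i => SignType.sign (∑ j, a i j * x j + b i), ⟨x, fun i => ?_⟩, ?_⟩
  · simp
  · funext i
    rw [hx i, real_sign_eq]
end

section
/- Let n ≥ 3, let V = {1,…,n}, and consider the complete directed graph on V, i.e., E = {(u, u') ∈ V×V : u ≠ u'}, with an injective labeling i : E → {1, …, n(n−1)} and edge weights w_e = 2^{i(e)−1}. Then for any s, v ∈ V: (a) any two distinct simple directed paths from s to v have different costs; and (b) if v ≠ s, the number of distinct costs of simple directed paths from s to v is at least (n−2)!. -/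
theorem edges_nodup {α : Type*} (p : List α) (hp : p.Nodup) : (p.zip p.tail).Nodup := by
  have h : ((p.zip p.tail).map Prod.snd).Nodup := by
    rw [List.map_snd_zip (by simp)]
    exact hp.sublist (List.tail_sublist _)
  exact List.Nodup.of_map _ h

theorem edges_mem {α : Type*} (R : α → α → Prop) (p : List α) (hp : p.IsChain R) :
    ∀ e ∈ p.zip p.tail, R e.1 e.2 := by
  induction p with
  | nil => simp
  | cons a p ih =>
    cases p with
    | nil => simp
    | cons b p =>
      rw [List.isChain_cons_cons] at hp
      intro e he
      simp only [List.tail_cons, List.zip_cons_cons, List.mem_cons] at he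
      rcases he with rfl | he
      · exact hp.1
      · exact ih hp.2 e he

theorem chain_of_nodup {α : Type*} (R : α → α → Prop) (hR : ∀ a b, a ≠ b → R a b)
    (p : List α) (hp : p.Nodup) : p.IsChain R := by
  refine List.Pairwise.isChain ?_
  exact List.Pairwise.imp (fun {a b} h => hR a b h) hp

theorem path_eq_of_edges {α : Type*} (s : α) (p q : List α) (hp : (s :: p).Nodup)
    (hq : (s :: q).Nodup)
    (h : ∀ e, e ∈ (s :: p).zip p ↔ e ∈ (s :: q).zip q) : p = q := by
  induction p generalizing s q with
  | nil =>
    cases q with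
    | nil => rfl
    | cons b q => have := h (s, b); simp at this
  | cons a p ih =>
    cases q with
    | nil => have := h (s, a); simp at this
    | cons b q =>
      have hs1 : ∀ x, (s, x) ∉ (a :: p).zip p := fun x hx =>
        (List.nodup_cons.1 hp).1 (List.of_mem_zip hx).1
      have hs2 : ∀ x, (s, x) ∉ (b :: q).zip q := fun x hx =>
        (List.nodup_cons.1 hq).1 (List.of_mem_zip hx).1
      simp only [List.zip_cons_cons (a := s), List.mem_cons] at h
      have hab : a = b := by
        rcases (h (s, a)).1 (Or.inl rfl) with h1 | h1
        · exact (Prod.mk.inj h1).2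
        · exact absurd h1 (hs2 a)
      subst hab
      rw [ih a q (List.nodup_cons.1 hp).2 (List.nodup_cons.1 hq).2]
      rintro ⟨x, y⟩
      constructor
      · intro hx
        rcases (h (x, y)).1 (Or.inr hx) with h1 | h1
        · obtain ⟨rfl, rfl⟩ := Prod.mk.inj h1
          exact absurd hx (hs1 _)
        · exact h1
      · intro hx
        rcases (h (x, y)).2 (Or.inr hx) with h1 | h1
        · obtain ⟨rfl, rfl⟩ := Prod.mk.inj h1
          exact absurd hx (hs2 _)
        · exact h1

theorem cost_eq (n : ℕ) (E : Finset (Fin n × Fin n)) (lab : Fin n × Fin n → ℕ)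
    (hr : ∀ e ∈ E, 1 ≤ lab e)
    (hinj : ∀ e ∈ E, ∀ e' ∈ E, lab e = lab e' → e = e')
    (w : Fin n × Fin n → ℝ) (hw : ∀ e ∈ E, w e = (2 : ℝ) ^ (lab e - 1))
    (l : List (Fin n × Fin n)) (hl : l.Nodup) (hE : ∀ e ∈ l, e ∈ E) :
    (l.map w).sum = ((∑ i ∈ l.toFinset.image (fun e => lab e - 1), 2 ^ i : ℕ) : ℝ) := by
  rw [Finset.sum_image, ← List.sum_toFinset _ hl]
  · push_cast
    exact Finset.sum_congr rfl fun e he => hw e (hE e (List.mem_toFinset.1 he))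
  · intro a ha b hb hab
    have ha' := hE a (List.mem_toFinset.1 ha)
    have hb' := hE b (List.mem_toFinset.1 hb)
    have h1 := hr a ha'
    have h2 := hr b hb'
    simp only at hab
    exact hinj a ha' b hb' (by omega)

/-- paper's Example 3.1: on the complete directed graph on `n ≥ 3`
vertices with edge weights `2^(i(e)−1)` for an injective labeling
`i : E → {1, …, n(n−1)}`: (a) distinct simple `s`–`v` paths have distinct costs,
and (b) for `v ≠ s` the number of distinct costs of simple `s`–`v` paths is at
least `(n−2)!`. -/
theorem stmt_14 (n : ℕ) (hn : 3 ≤ n)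
    (E : Finset (Fin n × Fin n))
    (hE : E = Finset.univ.filter (fun e : Fin n × Fin n => e.1 ≠ e.2))
    (lab : Fin n × Fin n → ℕ)
    (hlab_range : ∀ e ∈ E, 1 ≤ lab e ∧ lab e ≤ n * (n - 1))
    (hlab_inj : ∀ e ∈ E, ∀ e' ∈ E, lab e = lab e' → e = e')
    (w : Fin n × Fin n → ℝ)
    (hwdef : ∀ e ∈ E, w e = (2 : ℝ) ^ (lab e - 1))
    (s v : Fin n) :
    (∀ p q : List (Fin n), IsSimplePath n E s v p → IsSimplePath n E s v q →
      pathCost n w p = pathCost n w q → p = q) ∧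
    (v ≠ s →
      Nat.factorial (n - 2) ≤
        {c : ℝ | ∃ p : List (Fin n),
          IsSimplePath n E s v p ∧ pathCost n w p = c}.ncard) := by
  have key : ∀ p q : List (Fin n), IsSimplePath n E s v p → IsSimplePath n E s v q →
      pathCost n w p = pathCost n w q → p = q := by
    rintro p q ⟨hp1, hp2, -, hp4⟩ ⟨hq1, hq2, -, hq4⟩ h
    have hpE : ∀ e ∈ p.zip p.tail, e ∈ E := edges_mem _ p hp4
    have hqE : ∀ e ∈ q.zip q.tail, e ∈ E := edges_mem _ q hq4
    have hr : ∀ e ∈ E, 1 ≤ lab e := fun e he => (hlab_range e he).1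
    unfold pathCost at h
    rw [cost_eq n E lab hr hlab_inj w hwdef _ (edges_nodup p hp1) hpE,
      cost_eq n E lab hr hlab_inj w hwdef _ (edges_nodup q hq1) hqE] at h
    have h2 := Finset.geomSum_injective (le_refl 2) (Nat.cast_injective h)
    have sub : ∀ l m : List (Fin n × Fin n), (∀ e ∈ l, e ∈ E) → (∀ e ∈ m, e ∈ E) →
        l.toFinset.image (fun e => lab e - 1) = m.toFinset.image (fun e => lab e - 1) →
        ∀ e ∈ l, e ∈ m := by
      intro l m hl hm hlm e he
      have : lab e - 1 ∈ m.toFinset.image (fun e => lab e - 1) := by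
        rw [← hlm]
        exact Finset.mem_image_of_mem (fun e => lab e - 1) (List.mem_toFinset.2 he)
      obtain ⟨f, hf, hfe⟩ := Finset.mem_image.1 this
      have hf' := List.mem_toFinset.1 hf
      have h1 := hr e (hl e he)
      have h3 := hr f (hm f hf')
      have : f = e := hlab_inj f (hm f hf') e (hl e he) (by omega)
      exact this ▸ hf'
    cases p with
    | nil => simp at hp2
    | cons a p =>
      cases q with
      | nil => simp at hq2
      | cons b q =>
        simp only [List.head?_cons, Option.some.injEq] at hp2 hq2
        subst hp2
        subst hq2
        rw [path_eq_of_edges _ p q hp1 hq1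
          (fun e => ⟨sub _ _ hpE hqE h2 e, sub _ _ hqE hpE h2.symm e⟩)]
  refine ⟨key, fun hvs => ?_⟩
  set L : List (Fin n) := ((Finset.univ.erase s).erase v).toList with hL
  have hLlen : L.length = n - 2 := by
    rw [hL, Finset.length_toList, Finset.card_erase_of_mem (by simp [hvs]),
      Finset.card_erase_of_mem (by simp), Finset.card_univ, Fintype.card_fin]
    omega
  have hLnd : L.Nodup := Finset.nodup_toList _
  have hpath : ∀ m ∈ L.permutations, IsSimplePath n E s v (s :: (m ++ [v])) := by
    intro m hm
    have hm' := List.mem_permutations.1 hm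
    have hmem : ∀ x, x ∈ m ↔ x ≠ v ∧ x ≠ s := by
      intro x
      rw [hm'.mem_iff, hL]
      simp
    have hmnd : m.Nodup := hm'.nodup_iff.2 hLnd
    have hnd : (s :: (m ++ [v])).Nodup := by
      rw [List.nodup_cons, List.nodup_append]
      refine ⟨?_, hmnd, by simp, ?_⟩
      · simp [hmem, hvs.symm]
      · intro a ha b hb
        rw [List.mem_singleton] at hb
        rw [hb]
        exact ((hmem a).1 ha).1
    refine ⟨hnd, rfl, ?_, ?_⟩
    · rw [← List.cons_append, List.getLast?_append]
      simp
    · refine chain_of_nodup _ ?_ _ hnd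
      intro a b hab
      rw [hE]
      simpa using hab
  have hfin : {c : ℝ | ∃ p : List (Fin n),
      IsSimplePath n E s v p ∧ pathCost n w p = c}.Finite := by
    refine ((List.finite_length_le (Fin n) n).image (pathCost n w)).subset ?_
    rintro c ⟨p, hp, rfl⟩
    refine ⟨p, ?_, rfl⟩
    simpa using hp.1.length_le_card
  calc Nat.factorial (n - 2)
      = (L.permutations.toFinset.image (fun m => pathCost n w (s :: (m ++ [v])))).card := by
        rw [Finset.card_image_of_injOn, List.toFinset_card_of_nodup
          (List.nodup_permutations L hLnd), List.length_permutations, hLlen]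
        intro a ha b hb hab
        have ha' := hpath a (by simpa using ha)
        have hb' := hpath b (by simpa using hb)
        have := key _ _ ha' hb' hab
        simpa using this
    _ ≤ _ := by
        rw [← Set.ncard_coe_finset]
        refine Set.ncard_le_ncard ?_ hfin
        intro c hc
        obtain ⟨m, hm, rfl⟩ := Finset.mem_image.1 (Finset.mem_coe.1 hc)
        exact ⟨_, hpath m (List.mem_toFinset.1 hm), rfl⟩
end
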